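/- arXiv:2308.00516 — 2 statements merged into one kernel-verified Lean document; each statement's English description precedes it below -/
import Mathlib

section
/- (Grönwall's lemma with lower Dini derivative) Let $I = [a, b)$ with $a < b \leq \infty$, and let $u, \beta : I \to \mathbb{R}$ be continuous functions such that for all $t \in I$ the lower right Dini derivative satisfies $\liminf_{h \to 0^+} \frac{u(t+h)-u(t)}{h} \leq \beta(t)u(t)$. Then for all $t \in I$, $u(t) \leq \exp\left(\int_a^t \beta(s)\,ds\right) u(a)$. -/
open Set Filter Topology in
/-- A monotone function whose right derivative vanishes everywhere is somewhere locally constant. -/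
theorem MonotoneOn.exists_lt_eq_of_hasDerivWithinAt_zero {X : ℝ → ℝ} {p q : ℝ} (hpq : p < q)
    (hX : MonotoneOn X (Ioo p q))
    (hd : ∀ c ∈ Ioo p q, HasDerivWithinAt X 0 (Ici c) c) :
    ∃ c ∈ Ioo p q, ∃ d ∈ Ioo p q, c < d ∧ X c = X d := by
  -- points where `X` grows at rate at most one at scale `1 / (k + 1)`
  let C : ℕ → Set ℝ := fun k => {c | c ∈ Ioo p q ∧
    ∀ d ∈ Ioo p q, c < d → d < c + 1 / ((k : ℝ) + 1) → X d - X c ≤ d - c}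
  have hcov : ∀ c ∈ Ioo p q, ∃ k, c ∈ C k := by
    intro c hc
    have h1 := (hd c hc).isLittleO.bound (c := 1) one_pos
    obtain ⟨δ, hδ, hball⟩ := Metric.mem_nhdsWithin_iff.1 h1
    obtain ⟨k, hk⟩ := exists_nat_one_div_lt hδ
    refine ⟨k, hc, fun d _ hcd hdk => ?_⟩
    have h2 : d ∈ Metric.ball c δ ∩ Ici c := by
      refine ⟨?_, hcd.le⟩
      rw [Metric.mem_ball, Real.dist_eq, abs_of_pos (by linarith)]
      linarith
    have h3 := hball h2
    simp only [mem_ofPred_eq, smul_zero, sub_zero, one_mul, Real.norm_eq_abs] at h3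
    rw [abs_of_pos (sub_pos.2 hcd)] at h3
    exact (le_abs_self _).trans h3
  obtain ⟨k, l, r, hlr, hlp, hrq, hrl, hdense⟩ : ∃ k : ℕ, ∃ l r : ℝ, l < r ∧ p < l ∧ r < q ∧
      r < l + 1 / ((k : ℝ) + 1) ∧ Ioo l r ⊆ closure (C k) := by
    let F : ℕ → Set ℝ := fun k => closure (C k) ∪ (Iic p ∪ Ici q)
    obtain ⟨x, hx, hxD⟩ : ∃ x ∈ Ioo p q, x ∈ ⋃ k, interior (closure (C k)) := by
      have hcl : ∀ k : ℕ, IsClosed (F k) := fun k =>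
        isClosed_closure.union (isClosed_Iic.union isClosed_Ici)
      have hU : ⋃ k, F k = univ := by
        refine eq_univ_of_forall fun c => ?_
        by_cases hc : c ∈ Ioo p q
        · obtain ⟨k, hk⟩ := hcov c hc
          exact mem_iUnion.2 ⟨k, Or.inl (subset_closure hk)⟩
        · refine mem_iUnion.2 ⟨0, Or.inr ?_⟩
          by_cases h : c ≤ p
          · exact Or.inl h
          · exact Or.inr (not_lt.1 fun h' => hc ⟨not_le.1 h, h'⟩)
      have hD := dense_iUnion_interior_of_closed hcl hU
      obtain ⟨x, hx, hxD⟩ := hD.inter_open_nonempty _ isOpen_Ioo (nonempty_Ioo.2 hpq)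
      refine ⟨x, hx, ?_⟩
      obtain ⟨k, hk⟩ := mem_iUnion.1 hxD
      refine mem_iUnion.2 ⟨k, ?_⟩
      rw [mem_interior_iff_mem_nhds] at hk ⊢
      filter_upwards [hk, isOpen_Ioo.mem_nhds hx] with y hy hy'
      rcases hy with hy | hy | hy
      · exact hy
      · exact absurd hy'.1 (not_lt.2 hy)
      · exact absurd hy'.2 (not_lt.2 hy)
    obtain ⟨k, hk⟩ := mem_iUnion.1 hxD
    have hpos : (0 : ℝ) < 1 / ((k : ℝ) + 1) := by positivity
    have hnhds : interior (closure (C k)) ∩ Ioo p q ∈ 𝓝 x :=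
      (isOpen_interior.inter isOpen_Ioo).mem_nhds ⟨hk, hx⟩
    obtain ⟨δ, hδ, hball⟩ := Metric.mem_nhds_iff.1 hnhds
    set η := min (δ / 2) (1 / ((k : ℝ) + 1) / 2) with hη
    have hη0 : 0 < η := by positivity
    have hη1 : η ≤ δ / 2 := min_le_left _ _
    have hη2 : η ≤ 1 / ((k : ℝ) + 1) / 2 := min_le_right _ _
    have hsub : ∀ y, x ≤ y → y ≤ x + η → y ∈ interior (closure (C k)) ∩ Ioo p q := by
      intro y h1 h2
      apply hball
      rw [Metric.mem_ball, Real.dist_eq, abs_of_nonneg (by linarith)]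
      linarith
    refine ⟨k, x, x + η, by linarith, hx.1, (hsub (x + η) (by linarith) le_rfl).2.2,
      by linarith, fun y hy => interior_subset (hsub y hy.1.le hy.2.le).1⟩
  have hmem : ∀ c ∈ Ioo l r, c ∈ Ioo p q := fun c hc => ⟨hlp.trans hc.1, hc.2.trans hrq⟩
  have hlip : ∀ c ∈ Ioo l r, ∀ d ∈ Ioo l r, c ≤ d → X d - X c ≤ d - c := by
    intro c hc d hd' hcd
    refine le_of_forall_pos_le_add fun ε hε => ?_
    have hmax : max l (c - ε) < c := max_lt hc.1 (by linarith)
    obtain ⟨e, he, heC⟩ := mem_closure_iff.1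
      (hdense (show (max l (c - ε) + c) / 2 ∈ Ioo l r from
        ⟨by linarith [le_max_left l (c - ε), hc.1], by linarith [hc.2]⟩))
      (Ioo (max l (c - ε)) c) isOpen_Ioo ⟨by linarith, by linarith⟩
    have hel : l < e := (le_max_left _ _).trans_lt he.1
    have hec : c - ε < e := (le_max_right _ _).trans_lt he.1
    have h1 := heC.2 d (hmem d hd') (he.2.trans_le hcd) (by linarith [hd'.2])
    have h2 := hX heC.1 (hmem c hc) he.2.le
    linarith
  have hmono : ∀ c ∈ Ioo l r, ∀ d ∈ Ioo l r, c ≤ d → X c ≤ X d := fun c hc d hd' h =>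
    hX (hmem c hc) (hmem d hd') h
  have hcont : ContinuousOn X (Ioo l r) := by
    refine LipschitzOnWith.continuousOn (K := 1) (LipschitzOnWith.of_dist_le_mul ?_)
    intro c hc d hd'
    rw [NNReal.coe_one, one_mul, Real.dist_eq, Real.dist_eq]
    rcases le_total c d with h | h
    · rw [abs_sub_comm, abs_of_nonneg (sub_nonneg.2 (hmono c hc d hd' h)), abs_sub_comm,
        abs_of_nonneg (sub_nonneg.2 h)]
      exact hlip c hc d hd' h
    · rw [abs_of_nonneg (sub_nonneg.2 (hmono d hd' c hc h)), abs_of_nonneg (sub_nonneg.2 h)]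
      exact hlip d hd' c hc h
  obtain ⟨c, hlc, hcr⟩ := exists_between hlr
  obtain ⟨d, hcd, hdr⟩ := exists_between hcr
  have hsub : Icc c d ⊆ Ioo l r := fun y hy => ⟨hlc.trans_le hy.1, hy.2.trans_lt hdr⟩
  have hconst := constant_of_has_deriv_right_zero (hcont.mono hsub)
    (fun y hy => hd y (hmem y (hsub (Ico_subset_Icc_self hy)))) d (right_mem_Icc.2 hcd.le)
  exact ⟨c, hmem c (hsub (left_mem_Icc.2 hcd.le)), d, hmem d (hsub (right_mem_Icc.2 hcd.le)),
    hcd, hconst.symm⟩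

open Set Filter Topology in
/-- If, at every point, a continuous function either takes smaller values arbitrarily close to the
right or has right derivative `+∞`, then its final value is at most its initial value. -/
theorem ContinuousOn.le_of_frequently_lt_or_tendsto_slope_atTop {g : ℝ → ℝ} {a b : ℝ}
    (hab : a ≤ b) (hg : ContinuousOn g (Icc a b))
    (h : ∀ x ∈ Ico a b, (∃ᶠ z in 𝓝[>] x, g z < g x) ∨ Tendsto (slope g x) (𝓝[>] x) atTop) :
    g b ≤ g a := by
  by_contra! hlt
  -- the last point at which `g` takes the value `c`
  have hlast : ∀ c ∈ Ioo (g a) (g b), ∃ x ∈ Ico a b, g x = c ∧ ∀ y ∈ Ioc x b, c < g y := by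
    intro c hc
    have hcomp : IsCompact (Icc a b ∩ g ⁻¹' Iic c) :=
      isCompact_Icc.of_isClosed_subset (hg.preimage_isClosed_of_isClosed isClosed_Icc isClosed_Iic)
        inter_subset_left
    obtain ⟨x, ⟨hx, hxc⟩, hmax⟩ := hcomp.exists_isGreatest ⟨a, left_mem_Icc.2 hab, hc.1.le⟩
    have hgt : ∀ y ∈ Ioc x b, c < g y := fun y hy =>
      not_le.1 fun hy' => absurd (hmax ⟨⟨hx.1.trans hy.1.le, hy.2⟩, hy'⟩) (not_le.2 hy.1)
    have hxb : x < b := lt_of_le_of_ne hx.2 (by rintro rfl; exact absurd hc.2 (not_lt.2 hxc))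
    refine ⟨x, ⟨hx.1, hxb⟩, le_antisymm hxc ?_, hgt⟩
    have hne : (𝓝[Ioc x b] x).NeBot := by
      rw [nhdsWithin_Ioc_eq_nhdsGT hxb]; infer_instance
    have ht : Tendsto g (𝓝[Ioc x b] x) (𝓝 (g x)) :=
      (hg x hx).mono (fun y hy => ⟨hx.1.trans hy.1.le, hy.2⟩)
    exact ge_of_tendsto ht (eventually_nhdsWithin_of_forall fun y hy => (hgt y hy).le)
  choose! X hXmem hgX hXlast using hlast
  have hstrict : StrictMonoOn X (Ioo (g a) (g b)) := by
    intro c hc d hd hcd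
    by_contra! hle
    rcases hle.eq_or_lt with heq | hlt'
    · have := hgX d hd
      rw [heq, hgX c hc] at this
      exact hcd.ne this
    · have := hXlast d hd (X c) ⟨hlt', (hXmem c hc).2.le⟩
      rw [hgX c hc] at this
      exact this.not_gt hcd
  have hderiv : ∀ c ∈ Ioo (g a) (g b), HasDerivWithinAt X 0 (Ici c) c := by
    intro c hc
    have hx := hXmem c hc
    have htop : Tendsto (slope g (X c)) (𝓝[>] (X c)) atTop := by
      refine (h _ hx).resolve_left fun hf => ?_
      obtain ⟨z, hz, hz'⟩ := (hf.and_eventually (Ioc_mem_nhdsGT hx.2)).exists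
      rw [hgX c hc] at hz
      exact hz.not_gt (hXlast c hc z hz')
    rw [hasDerivWithinAt_iff_isLittleO, Asymptotics.isLittleO_iff]
    intro ε hε
    obtain ⟨y₀, hy₀, hsl⟩ := (mem_nhdsGT_iff_exists_Ioo_subset' hx.2).1
      (htop.eventually_ge_atTop ε⁻¹)
    set y₁ := min y₀ b with hy₁
    have hXy : X c < y₁ := lt_min hy₀ hx.2
    have hy₁b : y₁ ≤ b := min_le_right _ _
    obtain ⟨z, hz, hzmin⟩ := (isCompact_Icc (a := y₁) (b := b)).exists_isMinOn
      (nonempty_Icc.2 hy₁b) (hg.mono (Icc_subset_Icc_left (hx.1.trans hXy.le)))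
    have hcz : c < g z := hXlast c hc z ⟨hXy.trans_le hz.1, hz.2⟩
    filter_upwards [self_mem_nhdsWithin, nhdsWithin_le_nhds (Iio_mem_nhds hcz),
      nhdsWithin_le_nhds (Iio_mem_nhds hc.2)] with d hcd hdz hdb
    rw [mem_Ici] at hcd
    rw [smul_zero, sub_zero]
    rcases hcd.eq_or_lt with rfl | hcd
    · simp
    have hd : d ∈ Ioo (g a) (g b) := ⟨hc.1.trans hcd, hdb⟩
    have hXcd := hstrict hc hd hcd
    have hXd : X d < y₁ := by
      by_contra! hle
      have := isMinOn_iff.1 hzmin (X d) ⟨hle, (hXmem d hd).2.le⟩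
      rw [hgX d hd] at this
      exact (mem_Iio.1 hdz).not_ge this
    have hs : ε⁻¹ ≤ slope g (X c) (X d) := hsl ⟨hXcd, hXd.trans_le (min_le_left _ _)⟩
    rw [slope_def_field, hgX c hc, hgX d hd, le_div_iff₀ (sub_pos.2 hXcd),
      inv_mul_le_iff₀ hε] at hs
    rwa [Real.norm_eq_abs, Real.norm_eq_abs, abs_of_pos (sub_pos.2 hXcd),
      abs_of_pos (sub_pos.2 hcd)]
  obtain ⟨c, hc, d, hd, hcd, heq⟩ :=
    hstrict.monotoneOn.exists_lt_eq_of_hasDerivWithinAt_zero hlt hderiv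
  exact (hstrict hc hd hcd).ne heq

open Filter in
/-- For the real-valued `liminf`, an upper bound still has its expected meaning unless the function
tends to `+∞`. -/
theorem Filter.frequently_lt_or_tendsto_atTop_of_liminf_le {α : Type*} {l : Filter α} {q : α → ℝ}
    {L : ℝ} (h : liminf q l ≤ L) : (∀ r, L < r → ∃ᶠ x in l, q x < r) ∨ Tendsto q l atTop := by
  by_cases htop : Tendsto q l atTop
  · exact Or.inr htop
  refine Or.inl fun r hr hf => ?_
  rw [tendsto_atTop] at htop
  push Not at htop
  obtain ⟨M, hM⟩ := htop
  have hbdd : BddAbove {c | ∀ᶠ x in l, c ≤ q x} := by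
    refine ⟨M, fun c hc => ?_⟩
    obtain ⟨x, hx, hx'⟩ := (hM.and_eventually hc).exists
    exact hx'.trans hx.le
  have hle : r ≤ liminf q l := by
    rw [liminf_eq]
    exact le_csSup hbdd (hf.mono fun x hx => not_lt.1 hx)
  linarith

open Set Filter Topology in
/-- Multiplying by a positive integrating factor and subtracting a small linear term turns the
differential inequality into a condition on the sign of increments. -/
theorem HasDerivAt.frequently_mul_sub_lt_or_tendsto_slope {u E : ℝ → ℝ} {x k ε : ℝ}
    (hE : HasDerivAt E (-(k * E x)) x) (hpos : ∀ z, 0 < E z) (hε : 0 < ε)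
    (h : (∀ r, k * u x < r → ∃ᶠ z in 𝓝[>] x, slope u x z < r) ∨
      Tendsto (slope u x) (𝓝[>] x) atTop) :
    (∃ᶠ z in 𝓝[>] x, u z * E z - ε * z < u x * E x - ε * x) ∨
      Tendsto (slope (fun z => u z * E z - ε * z) x) (𝓝[>] x) atTop := by
  have hEc : Tendsto E (𝓝[>] x) (𝓝 (E x)) := hE.continuousAt.mono_left nhdsWithin_le_nhds
  have hEs : Tendsto (slope E x) (𝓝[>] x) (𝓝 (-(k * E x))) :=
    (hasDerivAt_iff_tendsto_slope.1 hE).mono_left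
      (nhdsWithin_mono _ fun z (hz : x < z) => hz.ne')
  have hslope : ∀ z, x < z → slope (fun z => u z * E z - ε * z) x z =
      slope u x z * E z + (u x * slope E x z - ε) := by
    intro z hz
    have : z - x ≠ 0 := (sub_pos.2 hz).ne'
    simp only [slope_def_field]
    field_simp
    ring
  rcases h with h | h
  · left
    set r := k * u x + ε / (2 * E x) with hr
    have hlim : Tendsto (fun z => r * E z + (u x * slope E x z - ε)) (𝓝[>] x)
        (𝓝 (r * E x + (u x * (-(k * E x)) - ε))) :=
      (hEc.const_mul r).add ((hEs.const_mul (u x)).sub_const ε)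
    have hneg : r * E x + (u x * (-(k * E x)) - ε) < 0 := by
      have h1 : r * E x = k * u x * E x + ε / 2 := by
        have := (hpos x).ne'
        rw [hr]
        field_simp
      rw [h1]
      linarith
    have hfr := h r (by have := hpos x; rw [hr]; linarith [show 0 < ε / (2 * E x) by positivity])
    refine (hfr.and_eventually ((hlim.eventually_lt_const hneg).and
      self_mem_nhdsWithin)).mono ?_
    rintro z ⟨hz1, hz2, hz3⟩
    have hs : slope (fun z => u z * E z - ε * z) x z < 0 := by
      rw [hslope z hz3]
      nlinarith [mul_lt_mul_of_pos_right hz1 (hpos z)]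
    rw [slope_def_field, div_neg_iff] at hs
    rcases hs with hs | hs
    · linarith [hs.2]
    · linarith [hs.1]
  · right
    refine Tendsto.congr' (eventually_nhdsWithin_of_forall fun z hz => (hslope z hz).symm) ?_
    exact (h.atTop_mul_pos (hpos x) hEc).atTop_add ((hEs.const_mul (u x)).sub_const ε)

theorem stmt7 (a : ℝ) (b : EReal) (hab : (a : EReal) < b)
    (u β : ℝ → ℝ) (I : Set ℝ) (hI : I = {t : ℝ | a ≤ t ∧ (t : EReal) < b})
    (hu : ContinuousOn u I) (hβ : ContinuousOn β I)
    (hdini : ∀ t ∈ I,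
      Filter.liminf (fun h : ℝ => (u (t + h) - u t) / h) (nhdsWithin 0 (Set.Ioi 0))
        ≤ β t * u t) :
    ∀ t ∈ I, u t ≤ Real.exp (∫ s in a..t, β s) * u a := by
  intro t ht
  have hat : a ≤ t := by rw [hI] at ht; exact ht.1
  have hsub : Set.Icc a t ⊆ I := by
    intro y hy
    rw [hI] at ht ⊢
    exact ⟨hy.1, (EReal.coe_le_coe_iff.2 hy.2).trans_lt ht.2⟩
  let γ : ℝ → ℝ := Set.IccExtend hat ((Set.Icc a t).domRestrict β)
  have hγ : Continuous γ := (hβ.mono hsub).domRestrict.Icc_extend'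
  have hγβ : ∀ s ∈ Set.Icc a t, γ s = β s := fun s hs => Set.IccExtend_of_mem hat _ hs
  let E : ℝ → ℝ := fun x => Real.exp (-∫ s in a..x, γ s)
  have hE : ∀ x, HasDerivAt E (-(γ x * E x)) x := by
    intro x
    have := (hγ.integral_hasStrictDerivAt a x).hasDerivAt.fun_neg.exp
    convert this using 1
    simp only [E]
    ring
  have hEpos : ∀ x, 0 < E x := fun x => Real.exp_pos _
  have hdich : ∀ x ∈ Set.Ico a t,
      (∀ r, γ x * u x < r → ∃ᶠ z in nhdsWithin x (Set.Ioi x), slope u x z < r) ∨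
        Filter.Tendsto (slope u x) (nhdsWithin x (Set.Ioi x)) Filter.atTop := by
    intro x hx
    have hmap : Filter.map (fun h => x + h) (nhdsWithin 0 (Set.Ioi 0)) =
        nhdsWithin x (Set.Ioi x) := by
      simp
    have hcomp : (fun h : ℝ => (u (x + h) - u x) / h) = slope u x ∘ fun h => x + h := by
      funext h
      simp [slope_def_field]
    have hx' := Set.Ico_subset_Icc_self hx
    have := hdini x (hsub hx')
    rw [hcomp, ← hγβ x hx', Filter.liminf_comp, hmap] at this
    exact Filter.frequently_lt_or_tendsto_atTop_of_liminf_le this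
  have hEc : Continuous E := continuous_iff_continuousAt.2 fun x => (hE x).continuousAt
  have hle : ∀ ε > 0, u t * E t - ε * t ≤ u a * E a - ε * a := fun ε hε =>
    ContinuousOn.le_of_frequently_lt_or_tendsto_slope_atTop
      (g := fun z => u z * E z - ε * z) hat
      (((hu.mono hsub).mul hEc.continuousOn).sub (by fun_prop))
      fun x hx => (hE x).frequently_mul_sub_lt_or_tendsto_slope hEpos hε (hdich x hx)
  have hfin : u t * E t ≤ u a := by
    have hEa : E a = 1 := by simp [E]
    have hlim : Filter.Tendsto (fun ε : ℝ => u a + ε * (t - a)) (nhdsWithin 0 (Set.Ioi 0))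
        (nhds (u a)) := by
      have : Continuous fun ε : ℝ => u a + ε * (t - a) := by fun_prop
      simpa using (this.tendsto 0).mono_left nhdsWithin_le_nhds
    refine ge_of_tendsto hlim (eventually_nhdsWithin_of_forall fun ε hε => ?_)
    have := hle ε hε
    rw [hEa] at this
    linarith
  have hint : ∫ s in a..t, γ s = ∫ s in a..t, β s :=
    intervalIntegral.integral_congr fun s hs => hγβ s (by rwa [Set.uIcc_of_le hat] at hs)
  have hEt : E t = (Real.exp (∫ s in a..t, β s))⁻¹ := by
    simp only [E]
    rw [hint, Real.exp_neg]
  rw [hEt, ← div_eq_mul_inv, div_le_iff₀ (Real.exp_pos _)] at hfin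
  linarith
end

section
/- If a continuous function $f : [a,b) \to \mathbb{R}$ satisfies $\liminf_{h\to 0^+} \frac{f(t+h)-f(t)}{h} \leq 0$ for every $t \in [a,b)$, then $f$ is non-increasing on $[a,b)$. -/
open Set Filter Topology

/-- The last point of `[a, c]` at which a continuous function takes a given value. -/
theorem exists_last_eq_of_continuousOn {g : ℝ → ℝ} {a c y : ℝ} (hac : a ≤ c)
    (hg : ContinuousOn g (Icc a c)) (hy : y ∈ Ico (g a) (g c)) :
    ∃ q ∈ Ico a c, g q = y ∧ ∀ z ∈ Ioc q c, y < g z := by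
  have hcomp : IsCompact (Icc a c ∩ g ⁻¹' {y}) :=
    isCompact_Icc.of_isClosed_subset (hg.preimage_isClosed_of_isClosed isClosed_Icc
      isClosed_singleton) inter_subset_left
  obtain ⟨x, hx, hxy⟩ := intermediate_value_Icc hac hg (Ico_subset_Icc_self hy)
  obtain ⟨q, ⟨hq, hqy⟩, hmax⟩ := hcomp.exists_isGreatest ⟨x, hx, hxy⟩
  have hqy : g q = y := hqy
  have hqc : q < c := lt_of_le_of_ne hq.2 fun h => by
    rw [h] at hqy
    exact hy.2.ne' hqy
  refine ⟨q, ⟨hq.1, hqc⟩, hqy, fun z hz => ?_⟩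
  by_contra! hzy
  obtain ⟨w, hw, hwy⟩ := intermediate_value_Icc hz.2
    (hg.mono (Icc_subset_Icc_left (hq.1.trans hz.1.le))) ⟨hzy, hy.2.le⟩
  exact (hz.1.trans_le hw.1).not_ge (hmax ⟨⟨hq.1.trans (hz.1.le.trans hw.1), hw.2⟩, hwy⟩)

/-- A continuous function cannot have right derivative `+∞` at every point of an interval. -/
theorem exists_not_slope_tendsto_atTop {g : ℝ → ℝ} {u v : ℝ} (huv : u < v)
    (hg : ContinuousOn g (Icc u v)) :
    ∃ x ∈ Ico u v, ¬ ∀ N : ℝ, ∀ᶠ z in 𝓝[>] x, N < slope g x z := by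
  by_contra! h
  have key : ∀ N : ℝ, -g v ≤ -g u + -N * (v - u) := fun N =>
    image_le_of_liminf_slope_right_le_deriv_boundary (f := fun x => -g x)
      (B := fun x => -g u + -N * (x - u)) (B' := fun _ => -N) hg.neg (by simp)
      (by fun_prop)
      (fun x _ => by
        simpa using ((((hasDerivAt_id x).sub_const u).const_mul (-N)).const_add
          (-g u)).hasDerivWithinAt)
      (fun x hx r hr => by
        refine Eventually.frequently ((h x hx N).mono fun z hz => ?_)
        have : slope (fun x => -g x) x z = -slope g x z := by
          simp only [slope_def_field]; ring
        rw [this]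
        linarith)
      (right_mem_Icc.2 huv.le)
  have h1 := key ((g v - g u + 1) / (v - u))
  rw [neg_mul, div_mul_cancel₀ _ (sub_pos.2 huv).ne'] at h1
  linarith

/-- The levels lying just below a value `g p` that bounds `g` from below on some `[x, c]`
with `x < p`, at distance less than `p - x` and `ε`. -/
def levelsBelowGap (g : ℝ → ℝ) (a c ε : ℝ) : Set ℝ :=
  ⋃ x ∈ Icc a c, ⋃ p ∈ {p ∈ Ioc x c | ∀ z ∈ Icc x c, g p ≤ g z},
    Ioo (g p - min (p - x) ε) (g p)

theorem isOpen_levelsBelowGap (g : ℝ → ℝ) (a c ε : ℝ) : IsOpen (levelsBelowGap g a c ε) :=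
  isOpen_biUnion fun _ _ => isOpen_biUnion fun _ _ => isOpen_Ioo

theorem exists_mem_levelsBelowGap {g : ℝ → ℝ} {a c ε y₁ y₂ : ℝ} (hac : a ≤ c) (hε : 0 < ε)
    (hg : ContinuousOn g (Icc a c))
    (hd : ∀ x ∈ Ico a c, (∀ N : ℝ, ∀ᶠ z in 𝓝[>] x, N < slope g x z) ∨
      ∃ᶠ z in 𝓝[>] x, slope g x z < 0)
    (h₁ : g a ≤ y₁) (h₁₂ : y₁ < y₂) (h₂ : y₂ ≤ g c) :
    ∃ y ∈ levelsBelowGap g a c ε, y₁ < y ∧ y < y₂ := by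
  obtain ⟨q₁, hq₁, hgq₁, hlast⟩ := exists_last_eq_of_continuousOn hac hg
    ⟨h₁, h₁₂.trans_le h₂⟩
  obtain ⟨q₂, hq₂, hgq₂⟩ := intermediate_value_Icc hq₁.2.le
    (hg.mono (Icc_subset_Icc_left hq₁.1)) ⟨hgq₁.trans_le h₁₂.le, h₂⟩
  have hq₁₂ : q₁ < q₂ := lt_of_le_of_ne hq₂.1 fun h => by
    rw [h, hgq₂] at hgq₁
    exact h₁₂.ne' hgq₁
  obtain ⟨u, hu₁, hu₂⟩ := exists_between hq₁₂
  obtain ⟨x, hx, hnot⟩ := exists_not_slope_tendsto_atTop hu₂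
    (hg.mono (Icc_subset_Icc (hq₁.1.trans hu₁.le) hq₂.2))
  have hax : a ≤ x := hq₁.1.trans (hu₁.le.trans hx.1)
  have hxc : x < c := hx.2.trans_le hq₂.2
  obtain ⟨z, hzs, hz⟩ := (((hd x ⟨hax, hxc⟩).resolve_left hnot).and_eventually
    (Ioo_mem_nhdsGT hxc)).exists
  have hgz : g z < g x := by
    rw [slope_def_field, div_lt_iff₀ (sub_pos.2 hz.1)] at hzs
    linarith
  obtain ⟨p, hp, hmin⟩ := isCompact_Icc.exists_isMinOn (nonempty_Icc.2 hxc.le)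
    (hg.mono (Icc_subset_Icc_left hax))
  have hmin : ∀ z ∈ Icc x c, g p ≤ g z := hmin
  have hxp : x < p := lt_of_le_of_ne hp.1 fun h => by
    have := hmin z ⟨hz.1.le, hz.2.le⟩
    rw [← h] at this
    linarith
  have hp₁ : y₁ < g p := hlast p ⟨hu₁.trans_le (hx.1.trans hp.1), hp.2⟩
  have hp₂ : g p ≤ y₂ := hgq₂ ▸ hmin q₂ ⟨hx.2.le, hq₂.2⟩
  have hpos : 0 < min (p - x) ε := lt_min (sub_pos.2 hxp) hε
  obtain ⟨y, hy₁, hy₂⟩ := exists_between (max_lt hp₁ (sub_lt_self (g p) hpos))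
  refine ⟨y, ?_, (le_max_left _ _).trans_lt hy₁, hy₂.trans_le hp₂⟩
  simp only [levelsBelowGap, mem_iUnion]
  exact ⟨x, ⟨hax, hxc.le⟩, p, ⟨⟨hxp, hp.2⟩, hmin⟩, (le_max_right _ _).trans_lt hy₁, hy₂⟩

/-- If at each point either the right derivative is `+∞` or the lower right Dini derivative
is negative in the strong sense that some nearby slopes are, then the function does not grow.
Points of the first kind are handled by a Baire category argument on the levels. -/
theorem le_of_slope_tendsto_atTop_or_frequently_neg {g : ℝ → ℝ} {a c : ℝ} (hac : a ≤ c)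
    (hg : ContinuousOn g (Icc a c))
    (hd : ∀ x ∈ Ico a c, (∀ N : ℝ, ∀ᶠ z in 𝓝[>] x, N < slope g x z) ∨
      ∃ᶠ z in 𝓝[>] x, slope g x z < 0) :
    g c ≤ g a := by
  by_contra! hlt
  have hdense : Dense (⋂ n : ℕ, (levelsBelowGap g a c (1 / ((n : ℝ) + 1)) ∪
      (Icc (g a) (g c))ᶜ)) := by
    refine dense_iInter_of_isOpen
      (fun n => (isOpen_levelsBelowGap g a c _).union isClosed_Icc.isOpen_compl) fun n => ?_
    refine dense_iff_exists_between.2 fun {y₁ y₂} h => ?_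
    by_cases h' : max y₁ (g a) < min y₂ (g c)
    · obtain ⟨y, hy, hy₁, hy₂⟩ := exists_mem_levelsBelowGap hac
        (Nat.one_div_pos_of_nat (n := n)) hg hd (le_max_right y₁ _) h' (min_le_right y₂ _)
      exact ⟨y, Or.inl hy, (le_max_left _ _).trans_lt hy₁, hy₂.trans_le (min_le_left _ _)⟩
    · obtain ⟨y, hy₁, hy₂⟩ := exists_between h
      refine ⟨y, Or.inr fun hy => h' ?_, hy₁, hy₂⟩
      exact max_lt (lt_min h (hy₁.trans_le hy.2)) (lt_min (hy.1.trans_lt hy₂) hlt)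
  obtain ⟨y, hy, hya, hyc⟩ := hdense.exists_between hlt
  obtain ⟨q, hq, hgq, hlast⟩ := exists_last_eq_of_continuousOn hac hg ⟨hya.le, hyc⟩
  have hinf : ∀ᶠ z in 𝓝[>] q, 1 < slope g q z := by
    refine (hd q hq).elim (fun h => h 1) fun h => ?_
    obtain ⟨z, hzs, hz⟩ := (h.and_eventually (Ioo_mem_nhdsGT hq.2)).exists
    rw [slope_def_field, div_lt_iff₀ (sub_pos.2 hz.1)] at hzs
    linarith [hlast z ⟨hz.1, hz.2.le⟩]
  obtain ⟨d, hd', hsub⟩ := (mem_nhdsGT_iff_exists_Ioo_subset' hq.2).1 hinf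
  obtain ⟨e, hqe, hed⟩ := exists_between (lt_min hd' hq.2)
  have hec : e ≤ c := (hed.trans_le (min_le_right _ _)).le
  obtain ⟨w, hw, hmin⟩ := isCompact_Icc.exists_isMinOn (nonempty_Icc.2 hec)
    (hg.mono (Icc_subset_Icc_left (hq.1.trans hqe.le)))
  have hyw : y < g w := hlast w ⟨hqe.trans_le hw.1, hw.2⟩
  obtain ⟨n, hn⟩ := exists_nat_one_div_lt (sub_pos.2 hyw)
  have hyn := (mem_iInter.1 hy n).resolve_right fun h => h ⟨hya.le, hyc.le⟩
  simp only [levelsBelowGap, mem_iUnion] at hyn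
  obtain ⟨x, hx, p, ⟨hp, hpmin⟩, hp₁, hp₂⟩ := hyn
  have hqx : q < x := by
    by_contra! h
    linarith [hpmin q ⟨h, hq.2.le⟩]
  have hpe : p < e := by
    by_contra! h
    have : g w ≤ g p := hmin ⟨h, hp.2⟩
    linarith [min_le_right (p - x) (1 / ((n : ℝ) + 1))]
  have hqp : q < p := hqx.trans hp.1
  have hs : 1 < slope g q p := hsub ⟨hqp, hpe.trans (hed.trans_le (min_le_left _ _))⟩
  rw [slope_def_field, lt_div_iff₀ (sub_pos.2 hqp)] at hs
  linarith [min_le_left (p - x) (1 / ((n : ℝ) + 1))]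

/-- The real-valued `liminf` of right difference quotients takes the default value `0` when they
tend to `+∞`; apart from this case, its nonpositivity has the expected meaning. -/
theorem slope_tendsto_atTop_or_frequently_lt_of_liminf_nonpos {f : ℝ → ℝ} {t : ℝ}
    (h : liminf (fun h : ℝ => (f (t + h) - f t) / h) (𝓝[>] 0) ≤ 0) :
    (∀ N : ℝ, ∀ᶠ z in 𝓝[>] t, N < slope f t z) ∨
      ∀ l : ℝ, 0 < l → ∃ᶠ z in 𝓝[>] t, slope f t z < l := by
  have hev : ∀ r : ℝ, (∀ᶠ z in 𝓝[>] t, r ≤ slope f t z) ↔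
      ∀ᶠ h in 𝓝[>] (0 : ℝ), r ≤ (f (t + h) - f t) / h := fun r => by
    have hm : map (fun h => t + h) (𝓝[>] (0 : ℝ)) = 𝓝[>] t := by
      simp
    rw [← hm, eventually_map]
    simp [slope_def_field]
  rw [liminf_eq] at h
  by_cases hb : BddAbove {r : ℝ | ∀ᶠ h in 𝓝[>] (0 : ℝ), r ≤ (f (t + h) - f t) / h}
  · refine Or.inr fun l hl => ?_
    have : ¬ ∀ᶠ z in 𝓝[>] t, l ≤ slope f t z := fun hl' =>
      hl.not_ge ((le_csSup hb ((hev l).1 hl')).trans h)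
    simpa [not_eventually] using this
  · refine Or.inl fun N => ?_
    obtain ⟨r, hr, hNr⟩ := not_bddAbove_iff.1 hb N
    exact ((hev r).2 hr).mono fun z hz => hNr.trans_le hz

theorem stmt8 (a : ℝ) (b : EReal) (hab : (a : EReal) < b)
    (f : ℝ → ℝ) (I : Set ℝ) (hI : I = {t : ℝ | a ≤ t ∧ (t : EReal) < b})
    (hf : ContinuousOn f I)
    (hdini : ∀ t ∈ I,
      Filter.liminf (fun h : ℝ => (f (t + h) - f t) / h) (nhdsWithin 0 (Set.Ioi 0)) ≤ 0) :
    AntitoneOn f I := by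
  intro s hs c hc hsc
  have hsub : Icc s c ⊆ I := by
    subst hI
    exact fun x hx => ⟨hs.1.trans hx.1, (EReal.coe_le_coe_iff.2 hx.2).trans_lt hc.2⟩
  have key : ∀ l : ℝ, 0 < l → f c - l * c ≤ f s - l * s := fun l hl => by
    refine le_of_slope_tendsto_atTop_or_frequently_neg (g := fun x => f x - l * x) hsc
      ((hf.mono hsub).sub (by fun_prop)) fun x hx => ?_
    have hslope : ∀ᶠ z in 𝓝[>] x, slope (fun x => f x - l * x) x z = slope f x z - l := by
      filter_upwards [self_mem_nhdsWithin] with z hz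
      have : z - x ≠ 0 := (sub_pos.2 hz).ne'
      simp only [slope_def_field]
      field_simp
      ring
    refine (slope_tendsto_atTop_or_frequently_lt_of_liminf_nonpos
      (hdini x (hsub (Ico_subset_Icc_self hx)))).imp (fun h N => ?_) fun h => ?_
    · filter_upwards [hslope, h (N + l)] with z hz hz'
      linarith
    · refine ((h l hl).and_eventually hslope).mono fun z hz => ?_
      linarith [hz.1, hz.2]
  by_contra! hlt
  have hpos : 0 < c - s := sub_pos.2 (lt_of_le_of_ne hsc fun h => by simp [h] at hlt)
  have h2 : 0 < (f c - f s) / (2 * (c - s)) := div_pos (sub_pos.2 hlt) (by positivity)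
  have h3 := key _ h2
  have h4 : (f c - f s) / (2 * (c - s)) * (c - s) = (f c - f s) / 2 := by
    field_simp
  linarith
end
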